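/- arXiv:1004.0381 — 6 statements merged into one kernel-verified Lean document; each statement's English description precedes it below -/
import Mathlib

section
/- Let F be an M×M real matrix, Q an M×M symmetric positive semidefinite real matrix, and for i = 1,…,ℓ let f_{n_i} be the Riccati operator built from F, Q, an observation matrix C_{n_i} ∈ ℝ^{m_i×M} and a symmetric positive definite R_{n_i} ∈ ℝ^{m_i×m_i}. If the Grammian G = ∑_{i=1}^{ℓ} (F^{i−1})ᵀ C_{n_i}ᵀ C_{n_i} F^{i−1} is invertible, then there exists a constant α₀ > 0 such that f_{n_ℓ} ∘ f_{n_{ℓ−1}} ∘ ⋯ ∘ f_{n_1}(X) ⪯ α₀·I for every symmetric positive semidefinite M×M matrix X. -/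
open Matrix Finset

/-- The Riccati operator `f(X) = F X Fᵀ + Q − F X Cᵀ (C X Cᵀ + R)⁻¹ C X Fᵀ`. -/
noncomputable def riccatiMap {M m : ℕ} (F Q : Matrix (Fin M) (Fin M) ℝ)
    (C : Matrix (Fin m) (Fin M) ℝ) (R : Matrix (Fin m) (Fin m) ℝ)
    (X : Matrix (Fin M) (Fin M) ℝ) : Matrix (Fin M) (Fin M) ℝ :=
  F * X * Fᵀ + Q - F * X * Cᵀ * (C * X * Cᵀ + R)⁻¹ * (C * X * Fᵀ)

/-! The operator `f` is a minimum over gains: `f X ⪯ (F - K C) X (F - K C)ᵀ + Q + K R Kᵀ` for every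
`K`, because the difference is a completed square. Testing this against a linear functional
`L` of the state, `L f(X) Lᵀ ⪯ (L F - W C) X (L F - W C)ᵀ + L Q Lᵀ + W R Wᵀ` for every weight `W`,
and unrolling the recursion along the walk, one sees that after the `ℓ` steps `X` enters only
through `L F ^ ℓ - ∑ i, W i * C i * F ^ i`, while the remaining terms do not depend on `X`. With
`L = 1` the least-squares weights `W i = F ^ ℓ G⁻¹ (C i * F ^ i)ᵀ`, which reconstruct the initial
state from the observations and propagate it, make this coefficient vanish. -/

section CompletingTheSquare

variable {n p R : Type*} [Fintype p] [DecidableEq p] [CommRing R]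

lemma sub_mul_inv_mul_mul_transpose {S : Matrix p p R} (hS : S.IsSymm) (hdet : IsUnit S.det)
    (W B : Matrix n p R) :
    (W - B * S⁻¹) * S * (W - B * S⁻¹)ᵀ =
      W * S * Wᵀ - W * Bᵀ - B * Wᵀ + B * S⁻¹ * Bᵀ := by
  have hright : (W - B * S⁻¹) * S = W * S - B := by
    rw [Matrix.sub_mul, nonsing_inv_mul_cancel_right _ _ hdet]
  have hleft : (W - B * S⁻¹)ᵀ = Wᵀ - S⁻¹ * Bᵀ := by
    rw [transpose_sub, transpose_mul, transpose_nonsing_inv, hS.eq]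
  rw [hright, hleft, Matrix.sub_mul, Matrix.mul_sub, Matrix.mul_sub, Matrix.mul_assoc W S (S⁻¹ * _),
    mul_nonsing_inv_cancel_left _ _ hdet, ← Matrix.mul_assoc B]
  abel

end CompletingTheSquare

section PosSemidef

variable {n p R : Type*} [Finite n] [Fintype p] [CommRing R] [PartialOrder R] [StarRing R]
  [TrivialStar R]

lemma posSemidef_mul_mul_transpose {X : Matrix p p R} (hX : X.PosSemidef) (L : Matrix n p R) :
    (L * X * Lᵀ).PosSemidef := by
  simpa only [conjTranspose_eq_transpose_of_trivial] using hX.mul_mul_conjTranspose_same L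

lemma posDef_mul_mul_transpose_add [AddLeftMono R] {X : Matrix p p R} (hX : X.PosSemidef)
    {Y : Matrix n n R} (hY : Y.PosDef) (L : Matrix n p R) : (L * X * Lᵀ + Y).PosDef :=
  .posSemidef_add (posSemidef_mul_mul_transpose hX L) hY

open scoped MatrixOrder ComplexOrder in
lemma le_trace_smul_one_of_posSemidef {𝕜 : Type*} [RCLike 𝕜] [DecidableEq p] {A : Matrix p p 𝕜}
    (hA : A.PosSemidef) : A ≤ A.trace • (1 : Matrix p p 𝕜) := by
  have hbound : A ≤ algebraMap ℝ (Matrix p p 𝕜) (∑ i, hA.isHermitian.eigenvalues i) := by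
    rw [le_algebraMap_iff_spectrum_le (ha := hA.isHermitian),
      hA.isHermitian.spectrum_real_eq_range_eigenvalues]
    rintro _ ⟨i, rfl⟩
    exact single_le_sum (fun j _ ↦ hA.eigenvalues_nonneg j) (mem_univ i)
  rwa [Algebra.algebraMap_eq_smul_one, RCLike.real_smul_eq_coe_smul (K := 𝕜), RCLike.ofReal_sum,
    ← hA.isHermitian.trace_eq_sum_eigenvalues] at hbound

end PosSemidef

section Riccati

variable {M m : ℕ} {F Q X : Matrix (Fin M) (Fin M) ℝ} {R : Matrix (Fin m) (Fin m) ℝ}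

/-- The Kalman gain `F X Cᵀ (C X Cᵀ + R)⁻¹`, the minimizer of
`K ↦ (F - K C) X (F - K C)ᵀ + Q + K R Kᵀ`. -/
noncomputable def kalmanGain (F : Matrix (Fin M) (Fin M) ℝ) (C : Matrix (Fin m) (Fin M) ℝ)
    (R : Matrix (Fin m) (Fin m) ℝ) (X : Matrix (Fin M) (Fin M) ℝ) : Matrix (Fin M) (Fin m) ℝ :=
  F * X * Cᵀ * (C * X * Cᵀ + R)⁻¹

lemma mul_riccatiMap_mul_transpose_add_square {n : Type*} (hX : X.IsSymm) (hR : R.IsSymm)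
    {C : Matrix (Fin m) (Fin M) ℝ} (hdet : IsUnit (C * X * Cᵀ + R).det)
    (L : Matrix n (Fin M) ℝ) (W : Matrix n (Fin m) ℝ) :
    L * riccatiMap F Q C R X * Lᵀ +
        (W - L * kalmanGain F C R X) * (C * X * Cᵀ + R) * (W - L * kalmanGain F C R X)ᵀ =
      (L * F - W * C) * X * (L * F - W * C)ᵀ + L * Q * Lᵀ + W * R * Wᵀ := by
  have hsymm : (C * X * Cᵀ + R).IsSymm := by
    simp only [IsSymm, transpose_add, transpose_mul, transpose_transpose, hX.eq, hR.eq,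
      Matrix.mul_assoc]
  have hgain : L * kalmanGain F C R X = L * F * X * Cᵀ * (C * X * Cᵀ + R)⁻¹ := by
    simp only [kalmanGain, Matrix.mul_assoc]
  rw [hgain, sub_mul_inv_mul_mul_transpose hsymm hdet]
  simp only [riccatiMap, transpose_sub, transpose_mul, transpose_transpose, hX.eq, Matrix.mul_add,
    Matrix.add_mul, Matrix.mul_sub, Matrix.sub_mul, Matrix.mul_assoc]
  abel

lemma riccatiMap_eq_joseph (hX : X.IsSymm) (hR : R.IsSymm) {C : Matrix (Fin m) (Fin M) ℝ}
    (hdet : IsUnit (C * X * Cᵀ + R).det) :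
    riccatiMap F Q C R X =
      (F - kalmanGain F C R X * C) * X * (F - kalmanGain F C R X * C)ᵀ + Q +
        kalmanGain F C R X * R * (kalmanGain F C R X)ᵀ := by
  simpa using mul_riccatiMap_mul_transpose_add_square (F := F) (Q := Q) hX hR hdet 1
    (kalmanGain F C R X)

lemma posSemidef_riccatiMap (hQ : Q.PosSemidef) (hX : X.PosSemidef) (hR : R.PosDef)
    (C : Matrix (Fin m) (Fin M) ℝ) : (riccatiMap F Q C R X).PosSemidef := by
  rw [riccatiMap_eq_joseph (isHermitian_iff_isSymm.1 hX.isHermitian)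
    (isHermitian_iff_isSymm.1 hR.isHermitian)
    (posDef_mul_mul_transpose_add hX hR C).det_pos.ne'.isUnit]
  exact ((posSemidef_mul_mul_transpose hX _).add hQ).add
    (posSemidef_mul_mul_transpose hR.posSemidef _)

open scoped MatrixOrder in
lemma mul_riccatiMap_mul_transpose_le {n : Type*} [Finite n] (hX : X.PosSemidef) (hR : R.PosDef)
    (C : Matrix (Fin m) (Fin M) ℝ) (L : Matrix n (Fin M) ℝ) (W : Matrix n (Fin m) ℝ) :
    L * riccatiMap F Q C R X * Lᵀ ≤
      (L * F - W * C) * X * (L * F - W * C)ᵀ + L * Q * Lᵀ + W * R * Wᵀ := by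
  have hS : (C * X * Cᵀ + R).PosDef := posDef_mul_mul_transpose_add hX hR C
  rw [← mul_riccatiMap_mul_transpose_add_square (isHermitian_iff_isSymm.1 hX.isHermitian)
    (isHermitian_iff_isSymm.1 hR.isHermitian) hS.det_pos.ne'.isUnit]
  exact le_add_of_nonneg_right (posSemidef_mul_mul_transpose hS.posSemidef _).nonneg

end Riccati

section Walk

variable {M : ℕ} {F Q : Matrix (Fin M) (Fin M) ℝ}

lemma posSemidef_riccati_walk {ℓ : ℕ} (hQ : Q.PosSemidef) {m : Fin ℓ → ℕ}
    {C : ∀ i, Matrix (Fin (m i)) (Fin M) ℝ} {R : ∀ i, Matrix (Fin (m i)) (Fin (m i)) ℝ}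
    (hR : ∀ i, (R i).PosDef) {P : ℕ → Matrix (Fin M) (Fin M) ℝ} (hP₀ : (P 0).PosSemidef)
    (hP : ∀ i : Fin ℓ, P (i + 1) = riccatiMap F Q (C i) (R i) (P i)) {k : ℕ} (hk : k ≤ ℓ) :
    (P k).PosSemidef := by
  induction k with
  | zero => exact hP₀
  | succ k ih =>
    rw [hP ⟨k, hk⟩]
    exact posSemidef_riccatiMap hQ (ih (Nat.le_of_succ_le hk)) (hR _) _

open scoped MatrixOrder in
/-- `B` collects the noise accumulated by the linear estimator of `L` times the final state that
weights the `i`-th observation by `W i`; what matters is that it does not depend on `P 0`. -/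
lemma exists_mul_riccati_walk_mul_transpose_le {n : Type*} [Finite n] {ℓ : ℕ} (hQ : Q.PosSemidef)
    {m : Fin ℓ → ℕ} (C : ∀ i, Matrix (Fin (m i)) (Fin M) ℝ)
    {R : ∀ i, Matrix (Fin (m i)) (Fin (m i)) ℝ} (hR : ∀ i, (R i).PosDef)
    (L : Matrix n (Fin M) ℝ) (W : ∀ i, Matrix n (Fin (m i)) ℝ) :
    ∃ B : Matrix n n ℝ, B.PosSemidef ∧
      ∀ P : ℕ → Matrix (Fin M) (Fin M) ℝ, (P 0).PosSemidef →
        (∀ i : Fin ℓ, P (i + 1) = riccatiMap F Q (C i) (R i) (P i)) →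
        L * P ℓ * Lᵀ ≤
          (L * F ^ ℓ - ∑ i, W i * C i * F ^ (i : ℕ)) * P 0 *
            (L * F ^ ℓ - ∑ i, W i * C i * F ^ (i : ℕ))ᵀ + B := by
  induction ℓ generalizing L with
  | zero => exact ⟨0, .zero, by simp⟩
  | succ ℓ ih =>
    obtain ⟨B, hB, hwalk⟩ := ih (fun i ↦ C i.castSucc) (fun i ↦ hR i.castSucc)
      (L * F - W (Fin.last ℓ) * C (Fin.last ℓ)) (fun i ↦ W i.castSucc)
    let noise := L * Q * Lᵀ + W (Fin.last ℓ) * R (Fin.last ℓ) * (W (Fin.last ℓ))ᵀ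
    have hnoise : noise.PosSemidef := (posSemidef_mul_mul_transpose hQ _).add
      (posSemidef_mul_mul_transpose (hR _).posSemidef _)
    refine ⟨B + noise, hB.add hnoise, fun P hP₀ hP ↦ ?_⟩
    have hcoeff : L * F ^ (ℓ + 1) - ∑ i, W i * C i * F ^ (i : ℕ) =
        (L * F - W (Fin.last ℓ) * C (Fin.last ℓ)) * F ^ ℓ -
          ∑ i : Fin ℓ, W i.castSucc * C i.castSucc * F ^ (i : ℕ) := by
      simp only [Fin.sum_univ_castSucc, Fin.val_castSucc, Fin.val_last, Matrix.sub_mul, pow_succ',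
        Matrix.mul_assoc]
      abel
    have hPℓ : (P ℓ).PosSemidef := posSemidef_riccati_walk hQ hR hP₀ hP ℓ.le_succ
    calc L * P (ℓ + 1) * Lᵀ
        = L * riccatiMap F Q (C (Fin.last ℓ)) (R (Fin.last ℓ)) (P ℓ) * Lᵀ := by
          rw [show P (ℓ + 1) = _ from hP (Fin.last ℓ), Fin.val_last]
      _ ≤ (L * F - W (Fin.last ℓ) * C (Fin.last ℓ)) * P ℓ *
            (L * F - W (Fin.last ℓ) * C (Fin.last ℓ))ᵀ + noise := by
          rw [← add_assoc]
          exact mul_riccatiMap_mul_transpose_le hPℓ (hR _) _ L _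
      _ ≤ _ := by
          rw [hcoeff, ← add_assoc _ B noise]
          gcongr
          exact hwalk P hP₀ fun i ↦ hP i.castSucc

end Walk

open scoped MatrixOrder in
/-- The hypothesis `hH` says that the final state `F ^ ℓ x` of the noiseless system is determined by
the observations `C i * F ^ i * x`; an invertible Grammian determines even the initial state. -/
theorem riccati_walk_uniformly_bounded_general {M ℓ : ℕ}
    (F Q : Matrix (Fin M) (Fin M) ℝ) (hQ : Q.PosSemidef)
    (m : Fin ℓ → ℕ)
    (C : ∀ i : Fin ℓ, Matrix (Fin (m i)) (Fin M) ℝ)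
    (R : ∀ i : Fin ℓ, Matrix (Fin (m i)) (Fin (m i)) ℝ)
    (hR : ∀ i, (R i).PosDef)
    (H : Matrix (Fin M) (Fin M) ℝ)
    (hH : H * ∑ i : Fin ℓ, (F ^ (i : ℕ))ᵀ * (C i)ᵀ * C i * F ^ (i : ℕ) = F ^ ℓ) :
    ∃ α₀ : ℝ, 0 < α₀ ∧
      ∀ (X : Matrix (Fin M) (Fin M) ℝ), X.PosSemidef →
        ∀ P : ℕ → Matrix (Fin M) (Fin M) ℝ, P 0 = X →
          (∀ i : Fin ℓ, P (i + 1) = riccatiMap F Q (C i) (R i) (P i)) →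
          (α₀ • (1 : Matrix (Fin M) (Fin M) ℝ) - P ℓ).PosSemidef := by
  let W (i : Fin ℓ) := H * ((F ^ (i : ℕ))ᵀ * (C i)ᵀ)
  have hW : F ^ ℓ - ∑ i, W i * C i * F ^ (i : ℕ) = 0 := by
    rw [← hH, mul_sum, sub_eq_zero]
    simp only [W, Matrix.mul_assoc]
  obtain ⟨B, hB, hwalk⟩ := exists_mul_riccati_walk_mul_transpose_le hQ C hR 1 W
  refine ⟨B.trace + 1, by linarith [hB.trace_nonneg], ?_⟩
  rintro _ hX P rfl hP
  rw [← le_iff]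
  calc P ℓ ≤ B := by simpa [hW] using hwalk P hX hP
    _ ≤ B.trace • 1 := le_trace_smul_one_of_posSemidef hB
    _ ≤ (B.trace + 1) • 1 := by
        rw [add_smul, one_smul]
        exact le_add_of_nonneg_right PosSemidef.one.nonneg

/-- Uniform boundedness of the composition of Riccati operators along a walk
whose Grammian `∑_{i=1}^{ℓ} (F^{i−1})ᵀ C_{n_i}ᵀ C_{n_i} F^{i−1}` is invertible:
there is `α₀ > 0` with `f_{n_ℓ} ∘ ⋯ ∘ f_{n_1}(X) ⪯ α₀ I` for every positive
semidefinite `X`.  The composition is encoded by the sequence `P` with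
`P 0 = X` and `P (i+1) = f_{n_{i+1}}(P i)` (0-based indexing of the walk). -/
theorem riccati_walk_uniformly_bounded {M ℓ : ℕ} (hℓ : 0 < ℓ)
    (F Q : Matrix (Fin M) (Fin M) ℝ) (hQ : Q.PosSemidef)
    (m : Fin ℓ → ℕ)
    (C : ∀ i : Fin ℓ, Matrix (Fin (m i)) (Fin M) ℝ)
    (R : ∀ i : Fin ℓ, Matrix (Fin (m i)) (Fin (m i)) ℝ)
    (hR : ∀ i, (R i).PosDef)
    (hGram : IsUnit (∑ i : Fin ℓ, (F ^ (i : ℕ))ᵀ * (C i)ᵀ * C i * F ^ (i : ℕ))) :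
    ∃ α₀ : ℝ, 0 < α₀ ∧
      ∀ (X : Matrix (Fin M) (Fin M) ℝ), X.PosSemidef →
        ∀ P : ℕ → Matrix (Fin M) (Fin M) ℝ, P 0 = X →
          (∀ i : Fin ℓ, P (i + 1) = riccatiMap F Q (C i) (R i) (P i)) →
          (α₀ • (1 : Matrix (Fin M) (Fin M) ℝ) - P ℓ).PosSemidef :=
  riccati_walk_uniformly_bounded_general F Q hQ m C R hR _
    (nonsing_inv_mul_cancel_right _ (F ^ ℓ) ((isUnit_iff_isUnit_det _).1 hGram))
end

section
/- The Riccati operator is order preserving: if X and Y are symmetric positive semidefinite M×M matrices with X ⪯ Y, then f(X) ⪯ f(Y). -/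
open Matrix

/-!
For Hermitian `X`, the Riccati operator at `X` is the Schur complement of `C X Cᴴ + R` in the
joint covariance matrix `[F; C] X [F; C]ᴴ + diag(Q, R)`, which is monotone in `X`. Schur complements
are themselves monotone: let `D` be positive definite and `[A, B; Bᴴ, D] ⪯ [A', B'; B'ᴴ, D']`, and
subtract `A - B D⁻¹ Bᴴ` from both upper left corners. The smaller matrix becomes
`[B D⁻¹ Bᴴ, B; Bᴴ, D]`, whose Schur complement is zero, so both matrices are now positive
semidefinite; hence so is the Schur complement `A' - (A - B D⁻¹ Bᴴ) - B' D'⁻¹ B'ᴴ` of the larger.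
-/

section SchurComplement

variable {K l m : Type*} [Field K] [PartialOrder K] [StarRing K] [StarOrderedRing K]
variable [Finite l] [Fintype m] [DecidableEq m]

theorem posSemidef_fromBlocks_mul_inv_mul_conjTranspose (B : Matrix l m K) {D : Matrix m m K}
    (hD : D.PosDef) : (fromBlocks (B * D⁻¹ * Bᴴ) B Bᴴ D).PosSemidef := by
  have : Invertible D := hD.isUnit.invertible
  rw [hD.fromBlocks₂₂, sub_self]
  exact .zero

theorem posSemidef_schurComplement_sub_schurComplement {A A' : Matrix l l K}
    {B B' : Matrix l m K} {D D' : Matrix m m K} (hD : D.PosDef)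
    (h : (fromBlocks A' B' B'ᴴ D' - fromBlocks A B Bᴴ D).PosSemidef) :
    (A' - B' * D'⁻¹ * B'ᴴ - (A - B * D⁻¹ * Bᴴ)).PosSemidef := by
  have hD' : D'.PosDef := by
    have hsub : (D' - D).PosSemidef := h.submatrix Sum.inr
    simpa using hD.add_posSemidef hsub
  have : Invertible D' := hD'.isUnit.invertible
  have hblock : (fromBlocks (A' - (A - B * D⁻¹ * Bᴴ)) B' B'ᴴ D').PosSemidef := by
    convert (posSemidef_fromBlocks_mul_inv_mul_conjTranspose B hD).add h using 1
    simp only [sub_eq_add_neg, fromBlocks_neg, fromBlocks_add]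
    congr 1 <;> abel
  rw [sub_right_comm]
  exact (hD'.fromBlocks₂₂ _ _).mp hblock

end SchurComplement

section JointCovariance

variable {α l m n : Type*} [Fintype n]

/-- The joint covariance matrix `[F; C] X [F; C]ᴴ + diag(Q, R)` of the next state and the
observation, when the current state has covariance `X`. -/
def jointCovariance [Semiring α] [StarRing α] (F : Matrix l n α) (Q : Matrix l l α)
    (C : Matrix m n α) (R : Matrix m m α) (X : Matrix n n α) : Matrix (l ⊕ m) (l ⊕ m) α :=
  fromRows F C * X * (fromRows F C)ᴴ + fromBlocks Q 0 0 R

theorem jointCovariance_eq_fromBlocks [Semiring α] [StarRing α] (F : Matrix l n α)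
    (Q : Matrix l l α) (C : Matrix m n α) (R : Matrix m m α) {X : Matrix n n α}
    (hX : X.IsHermitian) :
    jointCovariance F Q C R X =
      fromBlocks (F * X * Fᴴ + Q) (F * X * Cᴴ) (F * X * Cᴴ)ᴴ (C * X * Cᴴ + R) := by
  simp [jointCovariance, conjTranspose_fromRows_eq_fromCols_conjTranspose, fromBlocks_add, hX.eq,
    Matrix.mul_assoc]

theorem posSemidef_jointCovariance_sub_jointCovariance [Finite l] [Finite m] [Ring α]
    [PartialOrder α] [StarRing α] (F : Matrix l n α) (Q : Matrix l l α) (C : Matrix m n α)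
    (R : Matrix m m α) {X Y : Matrix n n α} (hXY : (Y - X).PosSemidef) :
    (jointCovariance F Q C R Y - jointCovariance F Q C R X).PosSemidef := by
  have := Fintype.ofFinite l
  have := Fintype.ofFinite m
  rw [jointCovariance, jointCovariance, add_sub_add_right_eq_sub, ← Matrix.sub_mul,
    ← Matrix.mul_sub]
  exact hXY.mul_mul_conjTranspose_same (fromRows F C)

end JointCovariance

section HermitianRiccatiMap

variable {α l m n : Type*} [Fintype m] [Fintype n] [DecidableEq m]

/-- The Riccati operator over a commutative star ring, with conjugate transposes in place of
transposes. The matrix `F` may be rectangular, so the operator may change the index type. -/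
noncomputable def hermitianRiccatiMap [CommRing α] [StarRing α] (F : Matrix l n α)
    (Q : Matrix l l α) (C : Matrix m n α) (R : Matrix m m α) (X : Matrix n n α) : Matrix l l α :=
  F * X * Fᴴ + Q - F * X * Cᴴ * (C * X * Cᴴ + R)⁻¹ * (C * X * Fᴴ)

theorem hermitianRiccatiMap_eq_schurComplement [CommRing α] [StarRing α] (F : Matrix l n α)
    (Q : Matrix l l α) (C : Matrix m n α) (R : Matrix m m α) {X : Matrix n n α}
    (hX : X.IsHermitian) :
    hermitianRiccatiMap F Q C R X =
      F * X * Fᴴ + Q - F * X * Cᴴ * (C * X * Cᴴ + R)⁻¹ * (F * X * Cᴴ)ᴴ := by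
  simp [hermitianRiccatiMap, hX.eq, Matrix.mul_assoc]

theorem riccati_order_preserving_general [Finite l] [Field α] [PartialOrder α] [StarRing α]
    [StarOrderedRing α] (F : Matrix l n α) (Q : Matrix l l α) (C : Matrix m n α)
    (R : Matrix m m α) {X Y : Matrix n n α} (hX : X.IsHermitian)
    (hS : (C * X * Cᴴ + R).PosDef) (hXY : (Y - X).PosSemidef) :
    (hermitianRiccatiMap F Q C R Y - hermitianRiccatiMap F Q C R X).PosSemidef := by
  have hY : Y.IsHermitian := by simpa using hXY.isHermitian.add hX
  have hcov := posSemidef_jointCovariance_sub_jointCovariance F Q C R hXY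
  rw [jointCovariance_eq_fromBlocks F Q C R hX, jointCovariance_eq_fromBlocks F Q C R hY] at hcov
  rw [hermitianRiccatiMap_eq_schurComplement F Q C R hX,
    hermitianRiccatiMap_eq_schurComplement F Q C R hY]
  exact posSemidef_schurComplement_sub_schurComplement hS hcov

end HermitianRiccatiMap

theorem riccatiMap_eq_hermitianRiccatiMap {M m : ℕ} (F Q : Matrix (Fin M) (Fin M) ℝ)
    (C : Matrix (Fin m) (Fin M) ℝ) (R : Matrix (Fin m) (Fin m) ℝ) :
    riccatiMap F Q C R = hermitianRiccatiMap F Q C R := by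
  funext X
  simp only [riccatiMap, hermitianRiccatiMap, conjTranspose_eq_transpose_of_trivial]

/-- The Riccati operator is order preserving w.r.t. the Loewner order:
if `X ⪯ Y` (i.e. `Y − X` is positive semidefinite), then `f(X) ⪯ f(Y)`. -/
theorem riccati_order_preserving {M m : ℕ} (F Q : Matrix (Fin M) (Fin M) ℝ)
    (C : Matrix (Fin m) (Fin M) ℝ) (R : Matrix (Fin m) (Fin m) ℝ)
    (hQ : Q.PosSemidef) (hR : R.PosDef)
    (X Y : Matrix (Fin M) (Fin M) ℝ) (hX : X.PosSemidef) (hY : Y.PosSemidef)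
    (hXY : (Y - X).PosSemidef) :
    (riccatiMap F Q C R Y - riccatiMap F Q C R X).PosSemidef := by
  rw [riccatiMap_eq_hermitianRiccatiMap]
  exact riccati_order_preserving_general F Q C R hX.isHermitian
    (hR.posSemidef_add (hX.mul_mul_conjTranspose_same C)) hXY
end

section
/- The Riccati operator is concave on the positive semidefinite cone: for all symmetric positive semidefinite M×M matrices X, Y and every λ ∈ [0,1], f(λX + (1−λ)Y) ⪰ λ f(X) + (1−λ) f(Y). -/
open Matrix

/-!
For positive definite `S`, the Schur complement criterion says that `[[A, B], [Bᴴ, S]]` is positive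
semidefinite exactly when `B S⁻¹ Bᴴ ⪯ A`. The epigraph of `(B, S) ↦ B S⁻¹ Bᴴ` is thus cut out by a
linear matrix inequality, so this function is jointly convex. On symmetric `X` the Riccati operator
is an affine function of `X` minus its composition with the affine map `X ↦ (F X Cᵀ, C X Cᵀ + R)`.
-/

section MatrixFractional

open scoped ComplexOrder MatrixOrder

variable {m n 𝕜 : Type*} [RCLike 𝕜]

lemma convex_setOfPred_isHermitian : Convex ℝ {A : Matrix n n 𝕜 | A.IsHermitian} :=
  fun _ hA _ hB a b _ _ _ ↦ (hA.smul (.all a)).add (hB.smul (.all b))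

lemma convex_setOfPred_posDef : Convex ℝ {S : Matrix n n 𝕜 | S.PosDef} :=
  convex_iff_forall_pos.2 fun _ hS _ hT _ _ ha hb _ ↦ (hS.smul ha).add (hT.smul hb)

variable [Finite m] [Fintype n] [DecidableEq n]

lemma posSemidef_fromBlocks_iff {A : Matrix m m 𝕜} {B : Matrix m n 𝕜}
    {S : Matrix n n 𝕜} (hS : S.PosDef) :
    (fromBlocks A B Bᴴ S).PosSemidef ↔ B * S⁻¹ * Bᴴ ≤ A := by
  have := hS.isUnit.invertible
  exact PosDef.fromBlocks₂₂ A B hS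

lemma convexOn_mul_inv_mul_conjTranspose :
    ConvexOn ℝ {p : Matrix m n 𝕜 × Matrix n n 𝕜 | p.2.PosDef}
      (fun p ↦ p.1 * p.2⁻¹ * p.1ᴴ) := by
  refine convexOn_of_convex_epigraph ?_
  rintro ⟨⟨B, S⟩, A⟩ ⟨hS, hA⟩ ⟨⟨B', S'⟩, A'⟩ ⟨hS', hA'⟩ a b ha hb hab
  have hcomb : (a • S + b • S').PosDef := convex_setOfPred_posDef hS hS' ha hb hab
  refine ⟨hcomb, (posSemidef_fromBlocks_iff hcomb).1 ?_⟩
  have hblock := (((posSemidef_fromBlocks_iff hS).2 hA).smul ha).add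
    (((posSemidef_fromBlocks_iff hS').2 hA').smul hb)
  simpa [fromBlocks_smul, fromBlocks_add] using hblock

end MatrixFractional

section Innovation

open scoped MatrixOrder

variable {k m n : Type*} [Fintype n]

lemma posDef_mul_mul_transpose_add_s3 [Finite m] {C : Matrix m n ℝ} {R : Matrix m m ℝ}
    {X : Matrix n n ℝ} (hX : X.PosSemidef) (hR : R.PosDef) : (C * X * Cᵀ + R).PosDef := by
  simpa only [conjTranspose_eq_transpose_of_trivial] using
    PosDef.posSemidef_add (hX.mul_mul_conjTranspose_same C) hR

variable (F : Matrix k n ℝ) (C : Matrix m n ℝ) (R : Matrix m m ℝ)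

/-- The affine map `X ↦ (F X Cᵀ, C X Cᵀ + R)`: for a state with covariance `X`, the covariance of
the next state with the current measurement, and the covariance of the innovation. -/
def crossInnovationCov : Matrix n n ℝ →ᵃ[ℝ] Matrix k m ℝ × Matrix m m ℝ :=
  ((mulRightLinearMap k ℝ Cᵀ ∘ₗ mulLeftLinearMap n ℝ F).prod
    (mulRightLinearMap m ℝ Cᵀ ∘ₗ mulLeftLinearMap n ℝ C)).toAffineMap +
      AffineMap.const ℝ _ (0, R)

lemma crossInnovationCov_apply (X : Matrix n n ℝ) :
    crossInnovationCov F C R X = (F * X * Cᵀ, C * X * Cᵀ + R) := by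
  simp [crossInnovationCov]

lemma convexOn_mul_inv_mul_conjTranspose_comp_crossInnovationCov
    [Finite k] [Fintype m] [DecidableEq m] :
    ConvexOn ℝ {X : Matrix n n ℝ | (C * X * Cᵀ + R).PosDef}
      (fun X ↦ F * X * Cᵀ * (C * X * Cᵀ + R)⁻¹ * (F * X * Cᵀ)ᴴ) := by
  simpa only [Function.comp_def, Set.preimage_ofPred_eq, crossInnovationCov_apply] using
    convexOn_mul_inv_mul_conjTranspose.comp_affineMap (crossInnovationCov F C R)

end Innovation

section Riccati

open scoped MatrixOrder

variable {M m : ℕ} (F Q : Matrix (Fin M) (Fin M) ℝ)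
  (C : Matrix (Fin m) (Fin M) ℝ) (R : Matrix (Fin m) (Fin m) ℝ)

lemma riccatiMap_of_isHermitian {X : Matrix (Fin M) (Fin M) ℝ} (hX : X.IsHermitian) :
    riccatiMap F Q C R X =
      F * X * Fᵀ + Q - F * X * Cᵀ * (C * X * Cᵀ + R)⁻¹ * (F * X * Cᵀ)ᴴ := by
  have hcross : C * X * Fᵀ = (F * X * Cᵀ)ᴴ := by
    simp only [← conjTranspose_eq_transpose_of_trivial, conjTranspose_mul,
      conjTranspose_conjTranspose, hX.eq, Matrix.mul_assoc]
  rw [riccatiMap, hcross]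

theorem riccati_concave_general :
    ConcaveOn ℝ {X | X.IsHermitian ∧ (C * X * Cᵀ + R).PosDef} (riccatiMap F Q C R) := by
  have hfrac := convexOn_mul_inv_mul_conjTranspose_comp_crossInnovationCov F C R
  have hdom : Convex ℝ {X : Matrix (Fin M) (Fin M) ℝ |
      X.IsHermitian ∧ (C * X * Cᵀ + R).PosDef} := convex_setOfPred_isHermitian.inter hfrac.1
  have haffine : ConcaveOn ℝ {X : Matrix (Fin M) (Fin M) ℝ |
      X.IsHermitian ∧ (C * X * Cᵀ + R).PosDef} (fun X ↦ F * X * Fᵀ + Q) :=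
    ((mulRightLinearMap _ ℝ Fᵀ ∘ₗ mulLeftLinearMap _ ℝ F).concaveOn hdom).add_const Q
  exact (haffine.sub (hfrac.subset (fun _ hX ↦ hX.2) hdom)).congr
    fun _ hX ↦ (riccatiMap_of_isHermitian F Q C R hX.1).symm

end Riccati

/-- Concavity of the Riccati operator on the positive semidefinite cone:
`f(λX + (1−λ)Y) ⪰ λ f(X) + (1−λ) f(Y)` for `λ ∈ [0,1]`. -/
theorem riccati_concave {M m : ℕ} (F Q : Matrix (Fin M) (Fin M) ℝ)
    (C : Matrix (Fin m) (Fin M) ℝ) (R : Matrix (Fin m) (Fin m) ℝ)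
    (hQ : Q.PosSemidef) (hR : R.PosDef)
    (X Y : Matrix (Fin M) (Fin M) ℝ) (hX : X.PosSemidef) (hY : Y.PosSemidef)
    (lam : ℝ) (hlam0 : 0 ≤ lam) (hlam1 : lam ≤ 1) :
    (riccatiMap F Q C R (lam • X + (1 - lam) • Y)
      - (lam • riccatiMap F Q C R X + (1 - lam) • riccatiMap F Q C R Y)).PosSemidef :=
  (riccati_concave_general F Q C R).2 ⟨hX.1, posDef_mul_mul_transpose_add_s3 hX hR⟩
    ⟨hY.1, posDef_mul_mul_transpose_add_s3 hY hR⟩ hlam0 (sub_nonneg.2 hlam1) (add_sub_cancel _ _)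
end

section
/- The Riccati operator is sublinear: for every symmetric positive semidefinite M×M matrix X and every λ ∈ (0,1], λ f(X) ⪯ f(λX). Moreover, if Q is positive definite and λ ∈ (0,1), then f(λX) − λ f(X) is positive definite (strong sublinearity). -/
/-!
The Riccati operator `f` is positively homogeneous of degree one jointly in `(Q, R, X)`, so that
`f_{Q, R}(λ X) = λ f_{λ⁻¹ Q, λ⁻¹ R}(X)`. For `λ ≤ 1` the passage from `(Q, R)` to `(λ⁻¹ Q, λ⁻¹ R)`
increases both parameters: `f` is a translation in `Q`, which contributes the gain `(1 - λ) Q`, and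
it is monotone in `R` because inversion of positive definite matrices is antitone.
-/

open Matrix

section InverseMatrix

variable {n K : Type*} [Fintype n] [DecidableEq n] [Field K]

lemma matrix_inv_smul₀ {c : K} (hc : c ≠ 0) (A : Matrix n n K) : (c • A)⁻¹ = c⁻¹ • A⁻¹ := by
  by_cases hA : IsUnit A.det
  · exact inv_smul' A (Units.mk0 c hc) hA
  · have hcA : ¬IsUnit (c • A).det := by
      rwa [det_smul, IsUnit.mul_iff, and_iff_right (hc.isUnit.pow _)]
    rw [nonsing_inv_apply_not_isUnit _ hA, nonsing_inv_apply_not_isUnit _ hcA, smul_zero]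

variable [PartialOrder K] [StarRing K] [StarOrderedRing K]

-- `B - A` and `A⁻¹ - B⁻¹` are the two Schur complements of the block matrix `[B, 1; 1, A⁻¹]`.
lemma posSemidef_inv_sub_inv {A B : Matrix n n K} (hA : A.PosDef) (hAB : (B - A).PosSemidef) :
    (A⁻¹ - B⁻¹).PosSemidef := by
  have hB : B.PosDef := by simpa using hA.add_posSemidef hAB
  have := hA.isUnit.invertible
  have := hB.isUnit.invertible
  have hblock : (fromBlocks B 1 1ᴴ A⁻¹).PosSemidef :=
    (PosDef.fromBlocks₂₂ B 1 hA.inv).2 (by simpa using hAB)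
  simpa using (PosDef.fromBlocks₁₁ 1 A⁻¹ hB).1 hblock

end InverseMatrix

section RiccatiMap

variable {M m : ℕ} (F Q : Matrix (Fin M) (Fin M) ℝ) (C : Matrix (Fin m) (Fin M) ℝ)
  {R : Matrix (Fin m) (Fin m) ℝ} {X : Matrix (Fin M) (Fin M) ℝ}

lemma riccatiMap_smul_smul_smul (R : Matrix (Fin m) (Fin m) ℝ) (X : Matrix (Fin M) (Fin M) ℝ)
    {c : ℝ} (hc : c ≠ 0) :
    riccatiMap F (c • Q) C (c • R) (c • X) = c • riccatiMap F Q C R X := by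
  simp only [riccatiMap, Matrix.mul_smul, Matrix.smul_mul, ← smul_add, matrix_inv_smul₀ hc,
    smul_inv_smul₀ hc, ← smul_sub]

lemma riccatiMap_add (Q' : Matrix (Fin M) (Fin M) ℝ) (R : Matrix (Fin m) (Fin m) ℝ)
    (X : Matrix (Fin M) (Fin M) ℝ) :
    riccatiMap F (Q + Q') C R X = riccatiMap F Q C R X + Q' := by
  simp only [riccatiMap]
  abel

lemma posSemidef_riccatiMap_sub_riccatiMap {R' : Matrix (Fin m) (Fin m) ℝ} (hR : R.PosDef)
    (hRR' : (R' - R).PosSemidef) (hX : X.PosSemidef) :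
    (riccatiMap F Q C R' X - riccatiMap F Q C R X).PosSemidef := by
  have hS : (C * X * Cᵀ + R).PosDef :=
    hR.posSemidef_add (by simpa using hX.mul_mul_conjTranspose_same C)
  have hinv : ((C * X * Cᵀ + R)⁻¹ - (C * X * Cᵀ + R')⁻¹).PosSemidef :=
    posSemidef_inv_sub_inv hS (by simpa using hRR')
  have hXT : Xᵀ = X := by simpa using hX.isHermitian.eq
  have hdiff : riccatiMap F Q C R' X - riccatiMap F Q C R X =
      F * X * Cᵀ * ((C * X * Cᵀ + R)⁻¹ - (C * X * Cᵀ + R')⁻¹) * (F * X * Cᵀ)ᴴ := by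
    simp only [riccatiMap, conjTranspose_eq_transpose_of_trivial, transpose_mul,
      transpose_transpose, hXT, Matrix.mul_sub, Matrix.sub_mul, Matrix.mul_assoc]
    abel
  rw [hdiff]
  exact hinv.mul_mul_conjTranspose_same (F * X * Cᵀ)

lemma posSemidef_riccatiMap_smul_sub_smul_sub (hR : R.PosDef) (hX : X.PosSemidef) {c : ℝ}
    (hc₀ : 0 < c) (hc₁ : c ≤ 1) :
    (riccatiMap F Q C R (c • X) - c • riccatiMap F Q C R X - (1 - c) • Q).PosSemidef := by
  have hR' : (c⁻¹ • R - R).PosSemidef := by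
    have h := hR.posSemidef.smul (sub_nonneg.2 ((one_le_inv₀ hc₀).2 hc₁))
    rwa [sub_smul, one_smul] at h
  have hscale : riccatiMap F Q C R (c • X) = c • riccatiMap F Q C (c⁻¹ • R) X + (1 - c) • Q := by
    calc riccatiMap F Q C R (c • X)
        = riccatiMap F (c • (Q + (c⁻¹ - 1) • Q)) C (c • c⁻¹ • R) (c • X) := by
          rw [sub_smul, one_smul, add_sub_cancel, smul_inv_smul₀ hc₀.ne', smul_inv_smul₀ hc₀.ne']
      _ = c • (riccatiMap F Q C (c⁻¹ • R) X + (c⁻¹ - 1) • Q) := by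
          rw [riccatiMap_smul_smul_smul _ _ _ _ _ hc₀.ne', riccatiMap_add]
      _ = c • riccatiMap F Q C (c⁻¹ • R) X + (1 - c) • Q := by
          rw [smul_add, smul_smul, mul_sub, mul_inv_cancel₀ hc₀.ne', mul_one]
  rw [hscale, sub_right_comm, add_sub_cancel_right, ← smul_sub]
  exact (posSemidef_riccatiMap_sub_riccatiMap F Q C hR hR' hX).smul hc₀.le

end RiccatiMap

/-- Sublinearity of the Riccati operator: for `λ ∈ (0,1]`, `λ f(X) ⪯ f(λX)`;
moreover, if `Q` is positive definite and `λ ∈ (0,1)`, then `f(λX) − λ f(X)` is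
positive definite (strong sublinearity). -/
theorem riccati_sublinear {M m : ℕ} (F Q : Matrix (Fin M) (Fin M) ℝ)
    (C : Matrix (Fin m) (Fin M) ℝ) (R : Matrix (Fin m) (Fin m) ℝ)
    (hQ : Q.PosSemidef) (hR : R.PosDef)
    (X : Matrix (Fin M) (Fin M) ℝ) (hX : X.PosSemidef) :
    (∀ lam : ℝ, 0 < lam → lam ≤ 1 →
        (riccatiMap F Q C R (lam • X) - lam • riccatiMap F Q C R X).PosSemidef) ∧
      (Q.PosDef → ∀ lam : ℝ, 0 < lam → lam < 1 →
        (riccatiMap F Q C R (lam • X) - lam • riccatiMap F Q C R X).PosDef) := by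
  have hgain {c : ℝ} (hc₀ : 0 < c) (hc₁ : c ≤ 1) :=
    posSemidef_riccatiMap_smul_sub_smul_sub F Q C hR hX hc₀ hc₁
  refine ⟨fun c hc₀ hc₁ => ?_, fun hQpos c hc₀ hc₁ => ?_⟩
  · simpa using (hgain hc₀ hc₁).add (hQ.smul (sub_nonneg.2 hc₁))
  · simpa using (hQpos.smul (sub_pos.2 hc₁)).posSemidef_add (hgain hc₀ hc₁.le)
end

section
/- Let f_1,…,f_N be Riccati operators with common F (with operator norm α = ‖F‖ > 1) and common symmetric positive semidefinite Q, and suppose the walk (n₁,…,n_ℓ) is uniformly contracting: f_{n_ℓ} ∘ ⋯ ∘ f_{n_1}(X) ⪯ α₀·I for every symmetric positive semidefinite X, for some α₀ > 0. Let σ : ℕ → {1,…,N} be any switching sequence and define switched Riccati iterates P(t+1) = f_{σ(t)}(P(t)) from an arbitrary symmetric positive semidefinite P(0). If there exists t′ such that σ(t′+s−1) = n_s for s = 1,…,ℓ and t′ + ℓ ≤ t, then ‖P(t)‖ ≤ α^{2(t−t′−ℓ)} α₀ + ((α^{2(t−t′−ℓ)} − 1)/(α² − 1)) ‖Q‖.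 -/
open Matrix Finset

/-- The operator (induced 2-) norm of a real square matrix. -/
noncomputable def opNorm {M : ℕ} (X : Matrix (Fin M) (Fin M) ℝ) : ℝ :=
  ‖LinearMap.toContinuousLinearMap (Matrix.toEuclideanLin X)‖

/-!
`riccatiMap F Q C R X` is the Schur complement of `C X Cᵀ + R` in the joint covariance
`[F; C] X [F; C]ᵀ + diag(Q, R)` of the next state and the observation, so it is positive
semidefinite and lies below `F X Fᵀ + Q`. Monotonicity of the operator norm turns this into the
scalar recursion `‖P (t + 1)‖ ≤ ‖F‖² ‖P t‖ + ‖Q‖`, which is iterated from time `t' + ℓ`, where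
contraction along the walk gives `‖P (t' + ℓ)‖ ≤ α₀`.
-/

theorem le_pow_mul_add_geom_sum_mul {A : Type*} [CommSemiring A] [PartialOrder A]
    [IsOrderedRing A] {u : ℕ → A} {a b : A} (ha : 0 ≤ a) (hu : ∀ n, u (n + 1) ≤ a * u n + b)
    (n : ℕ) : u n ≤ a ^ n * u 0 + (∑ i ∈ range n, a ^ i) * b := by
  have hgronwall := discrete_gronwall_prod_general (c := fun _ ↦ a) (b := fun _ ↦ b)
    (fun k _ ↦ hu k) (fun _ _ ↦ ha) n.zero_le
  have hreflect : ∑ k ∈ range n, b * a ^ (n - (k + 1)) = (∑ i ∈ range n, a ^ i) * b := by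
    rw [← mul_sum, mul_comm, ← sum_range_reflect (a ^ ·)]
    simp only [Nat.sub_sub, add_comm 1]
  simpa only [prod_const, Nat.card_Ico, Nat.Ico_zero_eq_range, card_range, hreflect,
    mul_comm (u 0)] using hgronwall

section OperatorNorm

open scoped ComplexOrder Matrix.Norms.L2Operator

variable {𝕜 : Type*} [RCLike 𝕜]

theorem clm_norm_le_norm_of_nonneg_of_le {E : Type*} [NormedAddCommGroup E]
    [InnerProductSpace 𝕜 E] {S T : E →L[𝕜] E} (hS : 0 ≤ S) (hST : S ≤ T) : ‖S‖ ≤ ‖T‖ := by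
  rw [ContinuousLinearMap.nonneg_iff_isPositive] at hS
  rw [ContinuousLinearMap.le_def] at hST
  rw [S.norm_eq_iSup_rayleighQuotient hS.isSymmetric]
  refine ciSup_le fun x ↦ ?_
  have hS_nonneg : 0 ≤ S.rayleighQuotient x := div_nonneg (hS.2 x) (sq_nonneg _)
  have hsub_nonneg : 0 ≤ (T - S).rayleighQuotient x := div_nonneg (hST.2 x) (sq_nonneg _)
  calc |S.rayleighQuotient x|
    _ = S.rayleighQuotient x := abs_of_nonneg hS_nonneg
    _ ≤ (T - S).rayleighQuotient x + S.rayleighQuotient x := le_add_of_nonneg_left hsub_nonneg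
    _ = T.rayleighQuotient x := by
      rw [← ContinuousLinearMap.rayleighQuotient_add, sub_add_cancel]
    _ ≤ |T.rayleighQuotient x| := le_abs_self _
    _ ≤ ‖T‖ := T.rayleighQuotient_le_norm x

variable {m n : Type*} [Fintype m] [Fintype n] [DecidableEq m] [DecidableEq n]

theorem l2_opNorm_le_of_posSemidef_sub {A B : Matrix n n 𝕜} (hA : A.PosSemidef)
    (hAB : (B - A).PosSemidef) : ‖A‖ ≤ ‖B‖ := by
  rw [← l2_opNorm_toEuclideanCLM A, ← l2_opNorm_toEuclideanCLM B]
  refine clm_norm_le_norm_of_nonneg_of_le ?_ ?_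
  · rw [ContinuousLinearMap.nonneg_iff_isPositive]
    exact isPositive_toEuclideanLin_iff.mpr hA
  · rw [ContinuousLinearMap.le_def, ← map_sub]
    exact isPositive_toEuclideanLin_iff.mpr hAB

theorem l2_opNorm_mul_mul_conjTranspose_le (F : Matrix m n 𝕜) (X : Matrix n n 𝕜) :
    ‖F * X * Fᴴ‖ ≤ ‖F‖ ^ 2 * ‖X‖ :=
  calc ‖F * X * Fᴴ‖
    _ ≤ ‖F‖ * ‖X‖ * ‖Fᴴ‖ := by grw [l2_opNorm_mul, l2_opNorm_mul]
    _ = ‖F‖ ^ 2 * ‖X‖ := by rw [l2_opNorm_conjTranspose]; ring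

theorem opNorm_eq_l2_opNorm {M : ℕ} (X : Matrix (Fin M) (Fin M) ℝ) : opNorm X = ‖X‖ := rfl

theorem opNorm_le_of_posSemidef_smul_one_sub {M : ℕ} {X : Matrix (Fin M) (Fin M) ℝ} {a : ℝ}
    (ha : 0 ≤ a) (hX : X.PosSemidef)
    (hXa : (a • (1 : Matrix (Fin M) (Fin M) ℝ) - X).PosSemidef) : opNorm X ≤ a := by
  rw [opNorm_eq_l2_opNorm]
  calc ‖X‖
    _ ≤ ‖a • (1 : Matrix (Fin M) (Fin M) ℝ)‖ := l2_opNorm_le_of_posSemidef_sub hX hXa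
    _ = ‖(fun _ : Fin M ↦ a)‖ := by rw [smul_one_eq_diagonal, l2_opNorm_diagonal]
    _ ≤ a := (pi_norm_const_le a).trans_eq (Real.norm_of_nonneg ha)

end OperatorNorm

section SchurComplement

variable {𝕜 n p q : Type*} [RCLike 𝕜] [Fintype n]
  {F : Matrix p n 𝕜} {Q : Matrix p p 𝕜} {C : Matrix q n 𝕜} {R : Matrix q q 𝕜} {X : Matrix n n 𝕜}

open scoped ComplexOrder

theorem posDef_mul_mul_conjTranspose_add [Finite q] (hX : X.PosSemidef) (hR : R.PosDef) :
    (C * X * Cᴴ + R).PosDef :=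
  PosDef.posSemidef_add (hX.mul_mul_conjTranspose_same C) hR

theorem posSemidef_fromBlocks_zero_zero [Finite p] [Finite q] (hQ : Q.PosSemidef)
    (hR : R.PosSemidef) : (fromBlocks Q 0 0 R).PosSemidef := by
  classical
  have := Fintype.ofFinite p
  have := Fintype.ofFinite q
  have hsum := (hQ.mul_mul_conjTranspose_same (fromRows 1 (0 : Matrix q p 𝕜))).add
    (hR.mul_mul_conjTranspose_same (fromRows (0 : Matrix p q 𝕜) 1))
  simp only [fromRows_mul _ _ Q, fromRows_mul _ _ R, fromRows_mul_fromCols, fromBlocks_add,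
    conjTranspose_fromRows_eq_fromCols_conjTranspose] at hsum
  simpa using hsum

theorem posSemidef_fromBlocks_jointCovariance [Finite p] [Finite q] (hX : X.PosSemidef)
    (hQ : Q.PosSemidef) (hR : R.PosSemidef) :
    (fromBlocks (F * X * Fᴴ + Q) (F * X * Cᴴ) (F * X * Cᴴ)ᴴ (C * X * Cᴴ + R)).PosSemidef := by
  have hcov := (hX.mul_mul_conjTranspose_same (fromRows F C)).add
    (posSemidef_fromBlocks_zero_zero hQ hR)
  simpa [fromRows_mul, conjTranspose_fromRows_eq_fromCols_conjTranspose, fromRows_mul_fromCols,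
    fromBlocks_add, conjTranspose_mul, hX.isHermitian.eq, Matrix.mul_assoc] using hcov

theorem posSemidef_schurComplement_jointCovariance [Finite p] [Fintype q] [DecidableEq q]
    (hX : X.PosSemidef) (hQ : Q.PosSemidef) (hR : R.PosDef) :
    (F * X * Fᴴ + Q - F * X * Cᴴ * (C * X * Cᴴ + R)⁻¹ * (F * X * Cᴴ)ᴴ).PosSemidef := by
  have hS : (C * X * Cᴴ + R).PosDef := posDef_mul_mul_conjTranspose_add hX hR
  have := hS.isUnit.invertible
  exact (hS.fromBlocks₂₂ _ _).mp (posSemidef_fromBlocks_jointCovariance hX hQ hR.posSemidef)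

end SchurComplement

section RiccatiMap

variable {M k : ℕ} {F Q X : Matrix (Fin M) (Fin M) ℝ} {C : Matrix (Fin k) (Fin M) ℝ}
  {R : Matrix (Fin k) (Fin k) ℝ}

theorem riccatiMap_eq_schurComplement (hX : X.IsHermitian) :
    riccatiMap F Q C R X =
      F * X * Fᴴ + Q - F * X * Cᴴ * (C * X * Cᴴ + R)⁻¹ * (F * X * Cᴴ)ᴴ := by
  have hcross : (F * X * Cᴴ)ᴴ = C * X * Fᴴ := by
    rw [conjTranspose_mul, conjTranspose_mul, conjTranspose_conjTranspose, hX.eq, Matrix.mul_assoc]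
  rw [hcross]
  simp only [riccatiMap, conjTranspose_eq_transpose_of_trivial]

theorem riccatiMap_posSemidef (hQ : Q.PosSemidef) (hR : R.PosDef) (hX : X.PosSemidef) :
    (riccatiMap F Q C R X).PosSemidef := by
  rw [riccatiMap_eq_schurComplement hX.isHermitian]
  exact posSemidef_schurComplement_jointCovariance hX hQ hR

theorem posSemidef_sub_riccatiMap (hR : R.PosDef) (hX : X.PosSemidef) :
    (F * X * Fᴴ + Q - riccatiMap F Q C R X).PosSemidef := by
  rw [riccatiMap_eq_schurComplement hX.isHermitian, sub_sub_cancel]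
  exact (posDef_mul_mul_conjTranspose_add hX hR).inv.posSemidef.mul_mul_conjTranspose_same _

open scoped Matrix.Norms.L2Operator in
theorem opNorm_riccatiMap_le (hQ : Q.PosSemidef) (hR : R.PosDef) (hX : X.PosSemidef) :
    opNorm (riccatiMap F Q C R X) ≤ opNorm F ^ 2 * opNorm X + opNorm Q := by
  simp only [opNorm_eq_l2_opNorm]
  calc ‖riccatiMap F Q C R X‖
    _ ≤ ‖F * X * Fᴴ + Q‖ := l2_opNorm_le_of_posSemidef_sub
        (riccatiMap_posSemidef hQ hR hX) (posSemidef_sub_riccatiMap hR hX)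
    _ ≤ ‖F‖ ^ 2 * ‖X‖ + ‖Q‖ := by
      grw [norm_add_le, l2_opNorm_mul_mul_conjTranspose_le]

end RiccatiMap

section SwitchedIterates

variable {ι : Type*} {M : ℕ} {F Q : Matrix (Fin M) (Fin M) ℝ} {m : ι → ℕ}
  {C : ∀ n, Matrix (Fin (m n)) (Fin M) ℝ} {R : ∀ n, Matrix (Fin (m n)) (Fin (m n)) ℝ}
  {σ : ℕ → ι} {P : ℕ → Matrix (Fin M) (Fin M) ℝ}

theorem posSemidef_of_switchedRiccati (hQ : Q.PosSemidef) (hR : ∀ n, (R n).PosDef)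
    (hP0 : (P 0).PosSemidef)
    (hrec : ∀ t, P (t + 1) = riccatiMap F Q (C (σ t)) (R (σ t)) (P t)) (t : ℕ) :
    (P t).PosSemidef := by
  induction t with
  | zero => exact hP0
  | succ t ih => exact hrec t ▸ riccatiMap_posSemidef hQ (hR _) ih

theorem opNorm_switchedRiccati_add_le (hQ : Q.PosSemidef) (hR : ∀ n, (R n).PosDef)
    (hP0 : (P 0).PosSemidef)
    (hrec : ∀ t, P (t + 1) = riccatiMap F Q (C (σ t)) (R (σ t)) (P t)) (s d : ℕ) :
    opNorm (P (s + d)) ≤ (opNorm F ^ 2) ^ d * opNorm (P s) +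
      (∑ i ∈ range d, (opNorm F ^ 2) ^ i) * opNorm Q := by
  have hstep (k : ℕ) :
      opNorm (P (s + (k + 1))) ≤ opNorm F ^ 2 * opNorm (P (s + k)) + opNorm Q := by
    rw [← add_assoc, hrec]
    exact opNorm_riccatiMap_le hQ (hR _) (posSemidef_of_switchedRiccati hQ hR hP0 hrec _)
  exact le_pow_mul_add_geom_sum_mul (u := fun k ↦ opNorm (P (s + k))) (sq_nonneg _) hstep d

/-- The walk `w` is uniformly contracting with level `a`: the composition of the Riccati operators
along `w` sends every positive semidefinite matrix below `a • 1` in the Loewner order. The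
composition is encoded by sequences `Y` whose first `ℓ` steps follow the walk, so that `Y ℓ` is the
image of `Y 0`. -/
def IsUniformlyContractingWalk {ℓ : ℕ} (F Q : Matrix (Fin M) (Fin M) ℝ)
    (C : ∀ n, Matrix (Fin (m n)) (Fin M) ℝ) (R : ∀ n, Matrix (Fin (m n)) (Fin (m n)) ℝ)
    (w : Fin ℓ → ι) (a : ℝ) : Prop :=
  ∀ X : Matrix (Fin M) (Fin M) ℝ, X.PosSemidef →
    ∀ Y : ℕ → Matrix (Fin M) (Fin M) ℝ, Y 0 = X →
      (∀ i : Fin ℓ, Y (i + 1) = riccatiMap F Q (C (w i)) (R (w i)) (Y i)) →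
      (a • (1 : Matrix (Fin M) (Fin M) ℝ) - Y ℓ).PosSemidef

theorem IsUniformlyContractingWalk.opNorm_le {ℓ : ℕ} {w : Fin ℓ → ι} {a : ℝ}
    (hw : IsUniformlyContractingWalk F Q C R w a) (ha : 0 ≤ a) (hQ : Q.PosSemidef)
    (hR : ∀ n, (R n).PosDef) (hP0 : (P 0).PosSemidef)
    (hrec : ∀ t, P (t + 1) = riccatiMap F Q (C (σ t)) (R (σ t)) (P t)) {s : ℕ}
    (hwindow : ∀ i : Fin ℓ, σ (s + i) = w i) :
    opNorm (P (s + ℓ)) ≤ a := by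
  have hpsd := posSemidef_of_switchedRiccati hQ hR hP0 hrec
  refine opNorm_le_of_posSemidef_smul_one_sub ha (hpsd _) ?_
  refine hw (P s) (hpsd s) (fun i ↦ P (s + i)) rfl fun i ↦ ?_
  rw [← hwindow i]
  exact hrec (s + i)

theorem switched_riccati_norm_bound_general {ℓ : ℕ} (hQ : Q.PosSemidef)
    (hR : ∀ n, (R n).PosDef) {w : Fin ℓ → ι} {α₀ : ℝ} (hα₀ : 0 ≤ α₀)
    (hcontr : IsUniformlyContractingWalk F Q C R w α₀) (hP0 : (P 0).PosSemidef)
    (hrec : ∀ t, P (t + 1) = riccatiMap F Q (C (σ t)) (R (σ t)) (P t)) {t' t : ℕ}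
    (hwindow : ∀ i : Fin ℓ, σ (t' + i) = w i) (ht : t' + ℓ ≤ t) :
    opNorm (P t) ≤ (opNorm F ^ 2) ^ (t - t' - ℓ) * α₀ +
      (∑ i ∈ range (t - t' - ℓ), (opNorm F ^ 2) ^ i) * opNorm Q := by
  obtain ⟨d, rfl⟩ := Nat.exists_eq_add_of_le ht
  rw [Nat.sub_sub, Nat.add_sub_cancel_left]
  grw [opNorm_switchedRiccati_add_le hQ hR hP0 hrec,
    hcontr.opNorm_le hα₀ hQ hR hP0 hrec hwindow]

end SwitchedIterates

/-- If the walk `(n₁,…,n_ℓ)` is uniformly contracting for the Riccati operators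
`f_1,…,f_N` (common `F` with `α = ‖F‖ > 1` and common `Q`), and a switching sequence
`σ` contains this walk in the window `[t′, t′+ℓ)` with `t′ + ℓ ≤ t`, then the switched
Riccati iterates `P(t+1) = f_{σ(t)}(P(t))` satisfy
`‖P(t)‖ ≤ α^{2(t−t′−ℓ)} α₀ + ((α^{2(t−t′−ℓ)} − 1)/(α² − 1)) ‖Q‖`. -/
theorem switched_riccati_norm_bound {M N ℓ : ℕ} (hℓ : 0 < ℓ)
    (F Q : Matrix (Fin M) (Fin M) ℝ) (hQ : Q.PosSemidef) (hF : 1 < opNorm F)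
    (m : Fin N → ℕ)
    (C : ∀ n : Fin N, Matrix (Fin (m n)) (Fin M) ℝ)
    (R : ∀ n : Fin N, Matrix (Fin (m n)) (Fin (m n)) ℝ)
    (hR : ∀ n, (R n).PosDef)
    (w : Fin ℓ → Fin N) (α₀ : ℝ) (hα₀ : 0 < α₀)
    -- uniform contraction of the composition along the walk:
    (hcontr : ∀ (X : Matrix (Fin M) (Fin M) ℝ), X.PosSemidef →
      ∀ Pc : ℕ → Matrix (Fin M) (Fin M) ℝ, Pc 0 = X →
        (∀ i : Fin ℓ, Pc (i + 1) = riccatiMap F Q (C (w i)) (R (w i)) (Pc i)) →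
        (α₀ • (1 : Matrix (Fin M) (Fin M) ℝ) - Pc ℓ).PosSemidef)
    (σ : ℕ → Fin N)
    (P : ℕ → Matrix (Fin M) (Fin M) ℝ)
    (hP0 : (P 0).PosSemidef)
    (hrec : ∀ t, P (t + 1) = riccatiMap F Q (C (σ t)) (R (σ t)) (P t))
    (t' t : ℕ)
    (hwindow : ∀ i : Fin ℓ, σ (t' + i) = w i)
    (ht : t' + ℓ ≤ t) :
    opNorm (P t) ≤ (opNorm F) ^ (2 * (t - t' - ℓ)) * α₀ +
      (((opNorm F) ^ (2 * (t - t' - ℓ)) - 1) / ((opNorm F) ^ 2 - 1)) * opNorm Q := by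
  rw [pow_mul, ← geom_sum_eq (one_lt_pow₀ hF two_ne_zero).ne']
  exact switched_riccati_norm_bound_general hQ hR hα₀.le hcontr hP0 hrec hwindow ht
end

section
/- Let f_1,…,f_N be Riccati operators with common F and Q, let (σ_t)_{t≥0} be any measurable sequence of random involutive permutations of {1,…,N} on a probability space, and let P₀ be a fixed symmetric positive semidefinite matrix. Define the GIKF covariance iterates \hat P^n(0) = P₀, \hat P^n(t+1) = f_n(\hat P^{σ_t(n)}(t)), the particle locations p_n(0) = n, p_n(t) = σ_t(p_n(t−1)), and the particle iterates P_n(0) = P₀, P_n(t+1) = f_{p_n(t)}(P_n(t)). Let q be a random index uniformly distributed on {1,…,N} and independent of (σ_t)_{t≥0}. Then for every t ≥ 0 and every Borel set Γ of symmetric positive semidefinite M×M matrices, P(\hat P^q(t) ∈ Γ) = (1/N) ∑_{l=1}^{N} P(P_l(t) ∈ Γ). -/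
open Matrix MeasureTheory ProbabilityTheory

/-- The Borel measurable structure on real matrices (as a Pi type). -/
instance matrixMeasurableSpace {N M : ℕ} : MeasurableSpace (Matrix (Fin N) (Fin M) ℝ) :=
  inferInstanceAs (MeasurableSpace (Fin N → Fin M → ℝ))

/-- The discrete measurable structure on permutations of a finite set. -/
instance permMeasurableSpace {N : ℕ} : MeasurableSpace (Equiv.Perm (Fin N)) := ⊤

/-!
Put `π_t = σ_t⁻¹ ∘ ⋯ ∘ σ_1⁻¹`, so that the particle started at `n` sits at `π_t n`. Since
`σ_t (π_t n) = π_{t-1} n`, the covariance of sensor `π_t n` at time `t + 1` is `f_{π_t n}` applied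
to the covariance of sensor `π_{t-1} n` at time `t`, which is the particle recursion. Hence at each
time, and for each switching sequence, the particle iterates are a permutation of the sensor
covariances, and the two families have the same averaged law. A uniform index independent of the
switching picks a sensor covariance according to this average.
-/

section Probability

variable {α Ω ι : Type*} [MeasurableSpace Ω] {μ : Measure Ω}

theorem measurableSet_preimage_of_dependsOn_finite {X : ι → Type*} [∀ i, MeasurableSpace (X i)]
    [∀ i, MeasurableSingletonClass (X i)] [∀ i, Countable (X i)] {s : Set ι} (hs : s.Finite)
    {g : (∀ i, X i) → α} (hg : DependsOn g s) (Γ : Set α) : MeasurableSet (g ⁻¹' Γ) := by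
  have : Finite s := hs
  have cylinder : g ⁻¹' Γ = s.domRestrict ⁻¹' (s.domRestrict '' (g ⁻¹' Γ)) := by
    refine (Set.subset_preimage_image _ _).antisymm ?_
    rintro x ⟨y, hy, hyx⟩
    rwa [Set.mem_preimage, ← dependsOn_iff_factorsThrough.mp hg hyx]
  rw [cylinder]
  exact measurable_pi_lambda _ (fun i => measurable_pi_apply i.1) (.of_discrete)

theorem tsum_measure_eq_of_forall_exists_equiv {κ : Type*} [Countable ι] [Countable κ]
    {A : ι → Set Ω} {B : κ → Set Ω} (hA : ∀ i, MeasurableSet (A i)) (hB : ∀ k, MeasurableSet (B k))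
    (h : ∀ ω, ∃ e : κ ≃ ι, ∀ k, ω ∈ A (e k) ↔ ω ∈ B k) :
    ∑' i, μ (A i) = ∑' k, μ (B k) := by
  have multiplicity_eq (ω : Ω) :
      ∑' i, (A i).indicator (1 : Ω → ENNReal) ω = ∑' k, (B k).indicator 1 ω := by
    obtain ⟨e, he⟩ := h ω
    rw [← e.tsum_eq fun i => (A i).indicator (1 : Ω → ENNReal) ω]
    exact tsum_congr fun k => by classical simp only [Set.indicator_apply, he]
  simp_rw [← fun i => lintegral_indicator_one (μ := μ) (hA i),
    ← fun k => lintegral_indicator_one (μ := μ) (hB k)]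
  rw [← lintegral_tsum fun i => (measurable_one.indicator (hA i)).aemeasurable,
    ← lintegral_tsum fun k => (measurable_one.indicator (hB k)).aemeasurable]
  exact lintegral_congr multiplicity_eq

theorem measure_mem_eq_tsum_of_indepFun [MeasurableSpace α] [MeasurableSpace ι]
    [MeasurableSingletonClass ι] [Countable ι] {q : Ω → ι} {S : Ω → α} (hqS : IndepFun q S μ)
    (hq : Measurable q) (hS : Measurable S) {A : ι → Set α} (hA : ∀ i, MeasurableSet (A i)) :
    μ {ω | S ω ∈ A (q ω)} = ∑' i, μ (q ⁻¹' {i}) * μ (S ⁻¹' A i) := by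
  have partition : {ω | S ω ∈ A (q ω)} = ⋃ i, q ⁻¹' {i} ∩ S ⁻¹' A i := by
    ext ω
    simp
  have disjoint : Pairwise (Function.onFun Disjoint fun i => q ⁻¹' {i} ∩ S ⁻¹' A i) :=
    fun i j hij => ((Set.disjoint_singleton.mpr hij).preimage q).mono
      Set.inter_subset_left Set.inter_subset_left
  rw [partition,
    measure_iUnion disjoint fun i => (hq (measurableSet_singleton i)).inter (hS (hA i))]
  exact tsum_congr fun i =>
    hqS.measure_inter_preimage_eq_mul _ _ (measurableSet_singleton i) (hA i)

end Probability

section Gossip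

variable {ι E : Type*}

/-- The states held by the nodes `n : ι` when, at step `t + 1`, node `n` applies its own map `f n`
to the state held by node `s t n` at time `t`. For Riccati operators these are the GIKF covariances
`\hat P^n(t)` along a fixed switching sequence `s`. -/
def gossipIterate (f : ι → E → E) (x₀ : E) (s : ℕ → Equiv.Perm ι) : ℕ → ι → E
  | 0, _ => x₀
  | t + 1, n => f n (gossipIterate f x₀ s t (s t n))

/-- The permutation sending the starting node of each particle to its location `p_n(t)` at time `t`.
The inverse moves a particle to the node that receives the state of its current node; it equals the
`σ_t` of the informal statement when the switching permutations are involutive. As there, `s 0` does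
not move the particles. -/
def particleLocation (s : ℕ → Equiv.Perm ι) : ℕ → Equiv.Perm ι
  | 0 => 1
  | t + 1 => (s (t + 1))⁻¹ * particleLocation s t

/-- The state `P_n(t)` of the particle started at node `n`, which is updated by the map of the node
it currently visits. -/
def particleIterate (f : ι → E → E) (x₀ : E) (s : ℕ → Equiv.Perm ι) : ℕ → ι → E
  | 0, _ => x₀
  | t + 1, n => f (particleLocation s t n) (particleIterate f x₀ s t n)

variable {f : ι → E → E} {x₀ : E} {s : ℕ → Equiv.Perm ι}

theorem eq_gossipIterate {x : ℕ → ι → E} (zero : ∀ n, x 0 n = x₀)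
    (succ : ∀ t n, x (t + 1) n = f n (x t (s t n))) (t : ℕ) (n : ι) :
    x t n = gossipIterate f x₀ s t n := by
  induction t generalizing n with
  | zero => exact zero n
  | succ t ih => rw [succ, ih, gossipIterate]

theorem eq_particleLocation {p : ℕ → ι → ι} (zero : ∀ n, p 0 n = n)
    (succ : ∀ t n, p (t + 1) n = (s (t + 1)).symm (p t n)) (t : ℕ) (n : ι) :
    p t n = particleLocation s t n := by
  induction t with
  | zero => exact zero n
  | succ t ih => rw [succ, ih, particleLocation, Equiv.Perm.mul_apply, Equiv.Perm.inv_def]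

theorem eq_particleIterate {x : ℕ → ι → E} (zero : ∀ n, x 0 n = x₀)
    (succ : ∀ t n, x (t + 1) n = f (particleLocation s t n) (x t n)) (t : ℕ) (n : ι) :
    x t n = particleIterate f x₀ s t n := by
  induction t with
  | zero => exact zero n
  | succ t ih => rw [succ, ih, particleIterate]

variable (f x₀ s)

theorem gossipIterate_succ_particleLocation (t : ℕ) (n : ι) :
    gossipIterate f x₀ s (t + 1) (particleLocation s t n) = particleIterate f x₀ s (t + 1) n := by
  induction t with
  | zero => rfl
  | succ t ih =>
    have step_back : s (t + 1) (particleLocation s (t + 1) n) = particleLocation s t n := by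
      rw [particleLocation, Equiv.Perm.mul_apply, Equiv.Perm.inv_def, Equiv.apply_symm_apply]
    calc gossipIterate f x₀ s (t + 2) (particleLocation s (t + 1) n)
        = f (particleLocation s (t + 1) n)
            (gossipIterate f x₀ s (t + 1) (s (t + 1) (particleLocation s (t + 1) n))) := rfl
      _ = f (particleLocation s (t + 1) n) (particleIterate f x₀ s (t + 1) n) := by
        rw [step_back, ih]
      _ = particleIterate f x₀ s (t + 2) n := rfl

theorem exists_perm_gossipIterate_eq_particleIterate (t : ℕ) :
    ∃ π : Equiv.Perm ι, ∀ n, gossipIterate f x₀ s t (π n) = particleIterate f x₀ s t n := by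
  cases t with
  | zero => exact ⟨1, fun _ => rfl⟩
  | succ t => exact ⟨particleLocation s t, gossipIterate_succ_particleLocation f x₀ s t⟩

theorem dependsOn_gossipIterate (t : ℕ) (n : ι) :
    DependsOn (fun s => gossipIterate f x₀ s t n) (Set.Iio t) := by
  intro s s' h
  induction t generalizing n with
  | zero => rfl
  | succ t ih =>
    have agree_before : ∀ i ∈ Set.Iio t, s i = s' i := fun i hi => h i (Nat.lt_succ_of_lt hi)
    simp only [gossipIterate, h t (Nat.lt_succ_self t), ih _ agree_before]

theorem dependsOn_particleLocation (t : ℕ) :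
    DependsOn (fun s : ℕ → Equiv.Perm ι => particleLocation s t) (Set.Iic t) := by
  intro s s' h
  induction t with
  | zero => rfl
  | succ t ih =>
    have agree_before : ∀ i ∈ Set.Iic t, s i = s' i := fun i hi => h i (Nat.le_succ_of_le hi)
    simp only [particleLocation, h (t + 1) Set.self_mem_Iic, ih agree_before]

theorem dependsOn_particleIterate (t : ℕ) (n : ι) :
    DependsOn (fun s => particleIterate f x₀ s t n) (Set.Iio t) := by
  intro s s' h
  induction t with
  | zero => rfl
  | succ t ih =>
    have location_eq : particleLocation s t = particleLocation s' t :=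
      dependsOn_particleLocation t fun i hi => h i (Nat.lt_succ_of_le hi)
    have agree_before : ∀ i ∈ Set.Iio t, s i = s' i := fun i hi => h i (Nat.lt_succ_of_lt hi)
    simp only [particleIterate, location_eq, ih agree_before]

end Gossip

section RandomSwitching

variable {ι E Ω : Type*} [Fintype ι] [MeasurableSpace ι] [MeasurableSingletonClass ι]
  [MeasurableSpace (Equiv.Perm ι)] [MeasurableSingletonClass (Equiv.Perm ι)] [MeasurableSpace Ω]
  {μ : Measure Ω}

theorem measure_gossipIterate_mem_eq_mul_sum_particleIterate (f : ι → E → E) (x₀ : E)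
    {S : Ω → ℕ → Equiv.Perm ι} (hS : Measurable S) {q : Ω → ι} (hq : Measurable q) {c : ENNReal}
    (hqc : ∀ i, μ (q ⁻¹' {i}) = c) (hqS : IndepFun q S μ) (t : ℕ) (Γ : Set E) :
    μ {ω | gossipIterate f x₀ (S ω) t (q ω) ∈ Γ} =
      c * ∑ l, μ {ω | particleIterate f x₀ (S ω) t l ∈ Γ} := by
  let A (n : ι) : Set (ℕ → Equiv.Perm ι) := {s | gossipIterate f x₀ s t n ∈ Γ}
  let B (l : ι) : Set (ℕ → Equiv.Perm ι) := {s | particleIterate f x₀ s t l ∈ Γ}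
  have hA (n : ι) : MeasurableSet (A n) := measurableSet_preimage_of_dependsOn_finite
    (Set.finite_Iio t) (dependsOn_gossipIterate f x₀ t n) Γ
  have hB (l : ι) : MeasurableSet (B l) := measurableSet_preimage_of_dependsOn_finite
    (Set.finite_Iio t) (dependsOn_particleIterate f x₀ t l) Γ
  have permuted (ω : Ω) : ∃ π : Equiv.Perm ι, ∀ l, S ω ∈ A (π l) ↔ S ω ∈ B l := by
    obtain ⟨π, hπ⟩ := exists_perm_gossipIterate_eq_particleIterate f x₀ (S ω) t
    exact ⟨π, fun l => by rw [Set.mem_ofPred_eq, Set.mem_ofPred_eq, hπ]⟩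
  calc μ {ω | S ω ∈ A (q ω)}
      = ∑' n, μ (q ⁻¹' {n}) * μ (S ⁻¹' A n) := measure_mem_eq_tsum_of_indepFun hqS hq hS hA
    _ = c * ∑' n, μ (S ⁻¹' A n) := by simp_rw [hqc, ENNReal.tsum_mul_left]
    _ = c * ∑' l, μ (S ⁻¹' B l) := by
      rw [tsum_measure_eq_of_forall_exists_equiv (fun n => hS (hA n)) (fun l => hS (hB l)) permuted]
    _ = c * ∑ l, μ (S ⁻¹' B l) := by rw [tsum_fintype]

theorem random_sensor_law_is_mixture_general [IsFiniteMeasure μ] {f : ι → E → E} {x₀ : E}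
    {σ : ℕ → Ω → Equiv.Perm ι} (hσ : ∀ t, Measurable (σ t))
    {x : ℕ → Ω → ι → E} (hx_zero : ∀ ω n, x 0 ω n = x₀)
    (hx_succ : ∀ t ω n, x (t + 1) ω n = f n (x t ω (σ t ω n)))
    {p : ℕ → Ω → ι → ι} (hp_zero : ∀ ω n, p 0 ω n = n)
    (hp_succ : ∀ t ω n, p (t + 1) ω n = (σ (t + 1) ω).symm (p t ω n))
    {y : ℕ → Ω → ι → E} (hy_zero : ∀ ω n, y 0 ω n = x₀)
    (hy_succ : ∀ t ω n, y (t + 1) ω n = f (p t ω n) (y t ω n))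
    {q : Ω → ι} (hq : Measurable q)
    (hq_uniform : ∀ i, μ.real {ω | q ω = i} = 1 / (Fintype.card ι : ℝ))
    (hqσ : IndepFun q (fun ω t => σ t ω) μ) (t : ℕ) (Γ : Set E) :
    μ.real {ω | x t ω (q ω) ∈ Γ} =
      (1 / (Fintype.card ι : ℝ)) * ∑ l, μ.real {ω | y t ω l ∈ Γ} := by
  have hx (ω n) : x t ω n = gossipIterate f x₀ (fun t => σ t ω) t n :=
    eq_gossipIterate (x := fun t => x t ω) (hx_zero ω) (fun t => hx_succ t ω) t n
  have hp (t ω n) : p t ω n = particleLocation (fun t => σ t ω) t n :=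
    eq_particleLocation (p := fun t => p t ω) (hp_zero ω) (fun t => hp_succ t ω) t n
  have hy (ω n) : y t ω n = particleIterate f x₀ (fun t => σ t ω) t n :=
    eq_particleIterate (x := fun t => y t ω) (hy_zero ω)
      (fun t n => by rw [hy_succ, hp]) t n
  have hq_const (i : ι) : μ (q ⁻¹' {i}) = ENNReal.ofReal (1 / Fintype.card ι) := by
    rw [← hq_uniform i]
    exact (ofReal_measureReal).symm
  simp_rw [hx, hy, measureReal_def]
  rw [measure_gossipIterate_mem_eq_mul_sum_particleIterate f x₀ (measurable_pi_lambda _ hσ) hq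
      hq_const hqσ, ENNReal.toReal_mul, ENNReal.toReal_ofReal (by positivity),
    ENNReal.toReal_sum fun l _ => measure_ne_top μ _]

end RandomSwitching

/-- The conditional error covariance of a uniformly randomly selected sensor has the
law of a uniformly mixed particle iterate:
`P(\hat P^q(t) ∈ Γ) = (1/N) ∑_{l=1}^N P(P_l(t) ∈ Γ)` for every Borel `Γ`. -/
theorem random_sensor_law_is_mixture {Mdim N : ℕ} (hN : 0 < N)
    {Ω : Type} [MeasurableSpace Ω] (Pr : Measure Ω) [IsProbabilityMeasure Pr]
    (F Q : Matrix (Fin Mdim) (Fin Mdim) ℝ) (hQ : Q.PosSemidef)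
    (m : Fin N → ℕ)
    (C : ∀ n : Fin N, Matrix (Fin (m n)) (Fin Mdim) ℝ)
    (R : ∀ n : Fin N, Matrix (Fin (m n)) (Fin (m n)) ℝ)
    (hR : ∀ n, (R n).PosDef)
    (σ : ℕ → Ω → Equiv.Perm (Fin N))
    (hσmeas : ∀ t, Measurable (σ t))
    (hσinv : ∀ t ω, Function.Involutive (σ t ω))
    (P₀ : Matrix (Fin Mdim) (Fin Mdim) ℝ) (hP₀ : P₀.PosSemidef)
    (Phat : ℕ → Ω → Fin N → Matrix (Fin Mdim) (Fin Mdim) ℝ)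
    (hPhat0 : ∀ ω n, Phat 0 ω n = P₀)
    (hPhat : ∀ t ω n, Phat (t + 1) ω n =
      riccatiMap F Q (C n) (R n) (Phat t ω (σ t ω n)))
    (p : ℕ → Ω → Fin N → Fin N)
    (hp0 : ∀ ω n, p 0 ω n = n)
    (hp : ∀ t ω n, p (t + 1) ω n = σ (t + 1) ω (p t ω n))
    (Ppart : ℕ → Ω → Fin N → Matrix (Fin Mdim) (Fin Mdim) ℝ)
    (hPpart0 : ∀ ω n, Ppart 0 ω n = P₀)
    (hPpart : ∀ t ω n, Ppart (t + 1) ω n =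
      riccatiMap F Q (C (p t ω n)) (R (p t ω n)) (Ppart t ω n))
    (q : Ω → Fin N)
    (hqmeas : Measurable q)
    (hquniform : ∀ i : Fin N, (Pr {ω | q ω = i}).toReal = 1 / (N : ℝ))
    (hqindep : IndepFun q (fun ω => fun t : ℕ => σ t ω) Pr) :
    ∀ (t : ℕ) (Γ : Set (Matrix (Fin Mdim) (Fin Mdim) ℝ)), MeasurableSet Γ →
      (Pr {ω | Phat t ω (q ω) ∈ Γ}).toReal =
        (1 / (N : ℝ)) * ∑ l : Fin N, (Pr {ω | Ppart t ω l ∈ Γ}).toReal := by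
  have hsymm (t ω) : (σ t ω).symm = σ t ω :=
    Function.Involutive.symm_eq_self_of_involutive _ (hσinv t ω)
  have hp_symm : ∀ t ω n, p (t + 1) ω n = (σ (t + 1) ω).symm (p t ω n) := by simpa only [hsymm]
  intro t Γ _
  simpa only [Fintype.card_fin, measureReal_def] using random_sensor_law_is_mixture_general
    (f := fun n => riccatiMap F Q (C n) (R n)) hσmeas hPhat0 hPhat hp0 hp_symm hPpart0 hPpart hqmeas
    (by simpa only [Fintype.card_fin, measureReal_def] using hquniform) hqindep t Γ
end
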